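/- The half-period map satisfies lim_{p₀ → 0⁺} 𝒯(p₀)/2 = π/(2√2), and consequently inf_{p₀ ∈ (0, √2)} 𝒯(p₀)/2 = π/(2√2). -/

import Mathlib

open Real Set Filter MeasureTheory
open scoped Topology

/-- The potential `g` from the Hamiltonian `H(x,p) = p²/2 + g(x)`. -/
noncomputable def g (x : ℝ) : ℝ := if |x| ≤ 1 then 1 - (1 - x ^ 2) ^ 4 else 1

/-- The derivative of `g`. -/
noncomputable def g' (x : ℝ) : ℝ := if |x| ≤ 1 then 8 * x * (1 - x ^ 2) ^ 3 else 0

/-- `(q, p)` is a (global) solution of the Hamiltonian system (HS): `q̇ = p`, `ṗ = -g'(q)`. -/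
def IsHSSol (q p : ℝ → ℝ) : Prop :=
  (∀ t : ℝ, HasDerivAt q (p t) t) ∧ (∀ t : ℝ, HasDerivAt p (-(g' (q t))) t)

/-- `F` is the flow of (HS): `F t q₀ p₀ = (q t, p t)` for the solution with data `(q₀, p₀)`. -/
def IsHSFlow (F : ℝ → ℝ → ℝ → ℝ × ℝ) : Prop :=
  ∀ q₀ p₀ : ℝ,
    IsHSSol (fun t => (F t q₀ p₀).1) (fun t => (F t q₀ p₀).2) ∧ F 0 q₀ p₀ = (q₀, p₀)

/-- The set `([0,∞) × {2}) ∪ ({0} × (0,2])`, codomain of the map `Δ`. -/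
def Dset : Set (ℝ × ℝ) := (Ici (0:ℝ) ×ˢ ({2} : Set ℝ)) ∪ ({(0:ℝ)} ×ˢ Ioc (0:ℝ) 2)

/-- `T` is the smallest positive period of `q`. -/
def IsSmallestPeriod (q : ℝ → ℝ) (T : ℝ) : Prop :=
  0 < T ∧ Function.Periodic q T ∧ ∀ T' : ℝ, 0 < T' → Function.Periodic q T' → T ≤ T'

/-- `T` is the period map `𝒯`, assigning to `p₀ ∈ (0, √2)` the smallest positive period of
the `q`-component of the solution of (HS) with initial datum `(0, p₀)`. -/
def IsPeriodMap (F : ℝ → ℝ → ℝ → ℝ × ℝ) (T : ℝ → ℝ) : Prop :=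
  ∀ p₀ ∈ Ioo (0:ℝ) (Real.sqrt 2), IsSmallestPeriod (fun t => (F t 0 p₀).1) (T p₀)

/-- `Δ` associates to `(t,x)` the datum in `Dset` whose orbit stays positive on `(0,t)`
and reaches `x` at time `t`. -/
def IsDeltaMap (F : ℝ → ℝ → ℝ → ℝ × ℝ) (Δ : ℝ → ℝ → ℝ × ℝ) : Prop :=
  ∀ t x : ℝ, 0 < t → 0 < x →
    Δ t x ∈ Dset ∧ (F t (Δ t x).1 (Δ t x).2).1 = x ∧
      ∀ s ∈ Ioo (0:ℝ) t, 0 < (F s (Δ t x).1 (Δ t x).2).1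

/-- The solution `u` of the conservation law built from the flow `F` and the map `Δ`
(extended by `0` at `x = 0`). -/
noncomputable def usol (F : ℝ → ℝ → ℝ → ℝ × ℝ) (Δ : ℝ → ℝ → ℝ × ℝ) (t x : ℝ) : ℝ :=
  if 0 < x then (F t (Δ t x).1 (Δ t x).2).2
  else if x < 0 then -(F t (Δ t (-x)).1 (Δ t (-x)).2).2
  else 0

lemma g_le_one (x : ℝ) : g x ≤ 1 := by
  unfold g
  split_ifs
  · nlinarith [sq_nonneg ((1 - x ^ 2) ^ 2)]
  · exact le_rfl

lemma hasDerivAt_poly (x : ℝ) :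
    HasDerivAt (fun x : ℝ => 1 - (1 - x ^ 2) ^ 4) (8 * x * (1 - x ^ 2) ^ 3) x := by
  have h := ((((hasDerivAt_id x).pow 2).const_sub 1).pow 4).const_sub 1
  refine (h.congr_deriv ?_)
  simp
  ring

lemma hasDerivAt_g (x : ℝ) : HasDerivAt g (g' x) x := by
  have hp := hasDerivAt_poly x
  rcases lt_trichotomy |x| 1 with h | h | h
  · have : g' x = 8 * x * (1 - x ^ 2) ^ 3 := by simp [g', h.le]
    rw [this]
    refine hp.congr_of_eventuallyEq ?_
    have : ∀ᶠ y in 𝓝 x, |y| < 1 := continuous_abs.continuousAt.eventually_lt continuousAt_const h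
    filter_upwards [this] with y hy
    simp [g, hy.le]
  · have hx2 : x ^ 2 = 1 := by rw [← sq_abs, h]; norm_num
    have : g' x = 0 := by simp [g', h.le, hx2]
    rw [this]
    rw [hx2] at hp
    have e : 8 * x * (1 - 1 : ℝ) ^ 3 = 0 := by norm_num
    rw [e] at hp
    rw [hasDerivAt_iff_isLittleO] at hp ⊢
    refine Asymptotics.IsBigO.trans_isLittleO ?_ hp
    refine Asymptotics.IsBigO.of_bound 1 (Eventually.of_forall fun y => ?_)
    have hgx : g x = 1 := by simp [g, h.le, hx2]
    rw [hgx]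
    simp only [hx2, g]
    split_ifs
    · simp
    · simp
  · have : g' x = 0 := by simp [g', not_le.2 h]
    rw [this]
    refine (hasDerivAt_const x (1:ℝ)).congr_of_eventuallyEq ?_
    have : ∀ᶠ y in 𝓝 x, 1 < |y| := continuousAt_const.eventually_lt continuous_abs.continuousAt h
    filter_upwards [this] with y hy
    simp [g, not_le.2 hy]

lemma energy {q p : ℝ → ℝ} (h : IsHSSol q p) (s t : ℝ) :
    p s ^ 2 / 2 + g (q s) = p t ^ 2 / 2 + g (q t) := by
  have hd : ∀ t, HasDerivAt (fun t => p t ^ 2 / 2 + g (q t)) 0 t := by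
    intro t
    have h1 := ((h.2 t).pow 2).div_const 2
    have h2 := (hasDerivAt_g (q t)).comp t (h.1 t)
    refine (h1.add h2).congr_deriv ?_
    simp
    ring
  exact is_const_of_deriv_eq_zero (fun t => (hd t).differentiableAt) (fun t => (hd t).deriv) s t

lemma abs_q_lt {q p : ℝ → ℝ} (h : IsHSSol q p) {p₀ : ℝ} (h0 : q 0 = 0) (hp : p 0 ^ 2 = p₀ ^ 2)
    (hp0 : p₀ ^ 2 < 2) (t : ℝ) : |q t| ≤ 1 ∧ 1 - p₀ ^ 2 / 2 ≤ (1 - q t ^ 2) ^ 3 ∧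
      (1 - q t ^ 2) ^ 3 ≤ 1 := by
  have e := energy h t 0
  have g0 : g 0 = 0 := by simp [g]
  rw [h0, hp, g0] at e
  have hle : |q t| ≤ 1 := by
    by_contra hc
    have : g (q t) = 1 := by simp [g, hc]
    nlinarith [sq_nonneg (p t)]
  have hg : g (q t) = 1 - (1 - q t ^ 2) ^ 4 := by simp [g, hle]
  have hq2 : q t ^ 2 ≤ 1 := by
    rw [← sq_abs]; nlinarith [abs_nonneg (q t)]
  have hu0 : 0 ≤ 1 - q t ^ 2 := by linarith
  have hu1 : 1 - q t ^ 2 ≤ 1 := by nlinarith [sq_nonneg (q t)]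
  refine ⟨hle, ?_, pow_le_one₀ hu0 hu1⟩
  have : (1 - q t ^ 2) ^ 4 ≤ (1 - q t ^ 2) ^ 3 := pow_le_pow_of_le_one hu0 hu1 (by norm_num)
  nlinarith [sq_nonneg (p t)]

lemma lip_poly : ∃ K : NNReal, LipschitzOnWith K g' (Icc (-1) 1) := by
  have hc : ContDiff ℝ 1 (fun x : ℝ => 8 * x * (1 - x ^ 2) ^ 3) := by fun_prop
  obtain ⟨K, hK⟩ := (hc.contDiffOn (s := Icc (-1) 1)).exists_lipschitzOnWith (by norm_num)
    (convex_Icc _ _) isCompact_Icc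
  refine ⟨K, fun x hx y hy => ?_⟩
  have := hK hx hy
  simpa [g', abs_le.2 hx, abs_le.2 hy] using this

lemma uniq {q p q₁ p₁ : ℝ → ℝ} (h : IsHSSol q p) (h' : IsHSSol q₁ p₁)
    (hq : ∀ t, |q t| ≤ 1) (hq' : ∀ t, |q₁ t| ≤ 1) (e1 : q 0 = q₁ 0) (e2 : p 0 = p₁ 0) (t : ℝ) :
    q t = q₁ t ∧ p t = p₁ t := by
  obtain ⟨K, hK⟩ := lip_poly
  have hv : LipschitzOnWith (max 1 K) (fun x : ℝ × ℝ => (x.2, -(g' x.1)))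
      {x : ℝ × ℝ | |x.1| ≤ 1} := by
    have hA : LipschitzOnWith 1 (fun x : ℝ × ℝ => x.2) {x : ℝ × ℝ | |x.1| ≤ 1} :=
      LipschitzWith.prod_snd.lipschitzOnWith
    have hB : LipschitzOnWith K (fun x : ℝ × ℝ => -(g' x.1)) {x : ℝ × ℝ | |x.1| ≤ 1} := by
      intro x hx y hy
      have h1 := hK (abs_le.1 hx) (abs_le.1 hy)
      rw [edist_neg_neg]
      refine h1.trans ?_
      gcongr
      exact le_max_left _ _
    exact hA.prodMk hB
  have := ODE_solution_unique_univ (v := fun _ x => ((x : ℝ × ℝ).2, -(g' x.1)))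
    (s := fun _ => {x : ℝ × ℝ | |x.1| ≤ 1}) (K := max 1 K) (t₀ := 0)
    (f := fun t => (q t, p t)) (g := fun t => (q₁ t, p₁ t))
    (fun _ => hv) (fun t => ⟨(h.1 t).prodMk (h.2 t), hq t⟩)
    (fun t => ⟨(h'.1 t).prodMk (h'.2 t), hq' t⟩) (by simp [e1, e2])
  have := congrFun this t
  simpa using this

lemma hasDerivAt_w {q p : ℝ → ℝ} (h : IsHSSol q p) (hq : ∀ t, |q t| ≤ 1) (ω t : ℝ) :
    HasDerivAt (fun t => q t * (ω * cos (ω * t)) - p t * sin (ω * t))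
      ((8 * (1 - q t ^ 2) ^ 3 - ω ^ 2) * (q t * sin (ω * t))) t := by
  have hl : HasDerivAt (fun t : ℝ => ω * t) ω t := by
    simpa using (hasDerivAt_id t).const_mul ω
  have h1 := (h.1 t).mul (hl.cos.const_mul ω)
  have h2 := (h.2 t).mul hl.sin
  refine (h1.sub h2).congr_deriv ?_
  simp [g', hq t]
  ring

lemma period_bounds {q p : ℝ → ℝ} (h : IsHSSol q p) {p₀ T : ℝ} (h0 : q 0 = 0) (hp : p 0 = p₀)
    (hpos : 0 < p₀) (hp0 : p₀ ^ 2 < 2) (hT : IsSmallestPeriod q T) :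
    2 * (π / √8) ≤ T ∧ T ≤ 2 * (π / √(8 * (1 - p₀ ^ 2 / 2))) := by
  have hb := abs_q_lt h h0 (by rw [hp]) hp0
  have hq := fun t => (hb t).1
  have hcont : Continuous q := continuous_iff_continuousAt.2 fun t => (h.1 t).continuousAt
  set ω := √(8 * (1 - p₀ ^ 2 / 2)) with hω
  have hω2 : ω ^ 2 = 8 * (1 - p₀ ^ 2 / 2) := Real.sq_sqrt (by nlinarith)
  have hωpos : 0 < ω := Real.sqrt_pos.2 (by nlinarith)
  have hπω : 0 < π / ω := div_pos pi_pos hωpos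
  -- a nonpositive point
  have hex : ∃ b ∈ Ioc 0 (π / ω), q b ≤ 0 := by
    by_contra! hc
    have hmono : MonotoneOn (fun t => q t * (ω * cos (ω * t)) - p t * sin (ω * t))
        (Icc 0 (π / ω)) := by
      refine monotoneOn_of_hasDerivWithinAt_nonneg (convex_Icc _ _)
        (fun t _ => (hasDerivAt_w h hq ω t).continuousAt.continuousWithinAt)
        (fun t _ => (hasDerivAt_w h hq ω t).hasDerivWithinAt) ?_
      intro t ht
      rw [interior_Icc] at ht
      have h1 := hc t ⟨ht.1, ht.2.le⟩
      have h2 : 0 ≤ sin (ω * t) := by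
        apply sin_nonneg_of_nonneg_of_le_pi
        · exact mul_nonneg hωpos.le ht.1.le
        · have := ht.2.le
          rw [le_div_iff₀ hωpos] at this
          linarith
      refine mul_nonneg ?_ (mul_nonneg h1.le h2)
      linarith [(hb t).2.1]
    have := hmono (left_mem_Icc.2 hπω.le) (right_mem_Icc.2 hπω.le) hπω.le
    have e : ω * (π / ω) = π := by field_simp
    simp only [e, h0] at this
    simp at this
    nlinarith [hc (π / ω) ⟨hπω, le_rfl⟩]
  -- positivity near 0
  have hnear : ∃ ε > 0, ∀ t ∈ Ioo 0 ε, 0 < q t := by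
    have hd := h.1 0
    rw [hp] at hd
    have h1 := hd.tendsto_slope.eventually (lt_mem_nhds hpos)
    have h2 : ∀ᶠ t in 𝓝[>] (0:ℝ), 0 < slope q 0 t :=
      h1.filter_mono (nhdsWithin_mono _ fun t ht => ne_of_gt ht)
    rw [eventually_nhdsWithin_iff, Metric.eventually_nhds_iff] at h2
    obtain ⟨ε, hε, hh⟩ := h2
    refine ⟨ε, hε, fun t ht => ?_⟩
    have := hh (y := t) (by simp [abs_of_pos ht.1, ht.2]) ht.1
    rw [slope_def_field, h0, sub_zero, sub_zero] at this
    exact (div_pos_iff_of_pos_right ht.1).1 this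
  obtain ⟨ε, hε, hnear⟩ := hnear
  obtain ⟨b, hb1, hb2⟩ := hex
  have hεb : ε ≤ b := by
    by_contra! hc
    linarith [hnear b ⟨hb1.1, hc⟩]
  -- first zero
  obtain ⟨a, haS, hamin⟩ := (isCompact_Icc.inter_right (isClosed_le hcont continuous_const) :
    IsCompact (Icc ε b ∩ {t | q t ≤ 0})).exists_isLeast ⟨b, ⟨hεb, le_rfl⟩, hb2⟩
  have ha : 0 < a := hε.trans_le haS.1.1
  have haω : a ≤ π / ω := haS.1.2.trans hb1.2
  have hqpos : ∀ t ∈ Ioo 0 a, 0 < q t := by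
    intro t ht
    by_contra! hc
    rcases lt_or_ge t ε with h1 | h1
    · linarith [hnear t ⟨ht.1, h1⟩]
    · have := hamin (show t ∈ Icc ε b ∩ {t | q t ≤ 0} from ⟨⟨h1, ht.2.le.trans haS.1.2⟩, hc⟩)
      linarith [ht.2]
  have hqa : q a = 0 := by
    refine le_antisymm haS.2 ?_
    have hcl : a ∈ closure (Ioo 0 a) := by
      rw [closure_Ioo ha.ne]; exact right_mem_Icc.2 ha.le
    have : closure (Ioo 0 a) ⊆ {t | 0 ≤ q t} :=
      closure_minimal (fun t ht => (hqpos t ht).le) (isClosed_le continuous_const hcont)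
    exact this hcl
  have hpa : p a = -p₀ := by
    have e := energy h a 0
    rw [hqa, h0, hp] at e
    have e2 : p a ^ 2 = p₀ ^ 2 := by linarith
    rcases sq_eq_sq_iff_eq_or_eq_neg.1 e2 with h1 | h1
    · exfalso
      have hd := h.1 a
      rw [h1] at hd
      have h1 := hd.tendsto_slope.eventually (lt_mem_nhds hpos)
      have h2 : ∀ᶠ t in 𝓝[<] a, 0 < slope q a t :=
        h1.filter_mono (nhdsWithin_mono _ fun t ht => ne_of_lt ht)
      obtain ⟨t, ht, ht'⟩ := (h2.and (Ioo_mem_nhdsLT ha)).exists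
      rw [slope_def_field, hqa, sub_zero] at ht
      have := hqpos t ht'
      have h3 : q t / (t - a) < 0 := div_neg_of_pos_of_neg this (by linarith [ht'.2])
      linarith
    · exact h1
  -- antiperiodicity
  have hanti : ∀ t, q (t + a) = - q t := by
    intro t
    have hs : IsHSSol (fun t => - q (t + a)) (fun t => - p (t + a)) := by
      refine ⟨fun t => ((h.1 (t + a)).comp_add_const t a).neg, fun t => ?_⟩
      refine ((h.2 (t + a)).comp_add_const t a).neg.congr_deriv ?_
      simp only [g', abs_neg]
      split_ifs <;> ring
    have := (uniq h hs hq (fun t => by simpa using hq (t + a)) (by simp [h0, hqa])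
      (by simp [hp, hpa]) t).1
    linarith
  have hper : Function.Periodic q (2 * a) := by
    intro t
    rw [two_mul, ← add_assoc, hanti, hanti, neg_neg]
  have hT1 : T ≤ 2 * a := hT.2.2 _ (by linarith) hper
  obtain ⟨hTpos, hTper, -⟩ := hT
  have hqT : q T = 0 := by have := hTper 0; rwa [zero_add, h0] at this
  have hpT : p T = p₀ := by
    have h1 : HasDerivAt (fun t => q (t + T)) (p (0 + T)) 0 := (h.1 (0 + T)).comp_add_const 0 T
    have h2 : (fun t => q (t + T)) = q := funext hTper
    rw [h2] at h1
    have := h1.unique (h.1 0)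
    rwa [zero_add, hp] at this
  have hT2 : 2 * a ≤ T := by
    by_contra! hc
    rcases lt_trichotomy T a with h1 | h1 | h1
    · linarith [hqpos T ⟨hTpos, h1⟩]
    · rw [h1, hpa] at hpT; linarith
    · have h2 := hqpos (T - a) ⟨by linarith, by linarith⟩
      have h3 := hanti (T - a)
      rw [sub_add_cancel] at h3
      linarith
  have h8 : (√8) ^ 2 = (8:ℝ) := Real.sq_sqrt (by norm_num)
  have h8pos : 0 < √(8:ℝ) := Real.sqrt_pos.2 (by norm_num)
  have hlow : π / √8 ≤ a := by
    by_contra! hc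
    rw [lt_div_iff₀ h8pos] at hc
    have hmono : AntitoneOn (fun t => q t * (√8 * cos (√8 * t)) - p t * sin (√8 * t))
        (Icc 0 a) := by
      refine antitoneOn_of_hasDerivWithinAt_nonpos (convex_Icc _ _)
        (fun t _ => (hasDerivAt_w h hq _ t).continuousAt.continuousWithinAt)
        (fun t _ => (hasDerivAt_w h hq _ t).hasDerivWithinAt) ?_
      intro t ht
      rw [interior_Icc] at ht
      have h1 := hqpos t ht
      have h2 : 0 ≤ sin (√8 * t) := by
        apply sin_nonneg_of_nonneg_of_le_pi
        · exact mul_nonneg h8pos.le ht.1.le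
        · nlinarith [ht.2]
      refine mul_nonpos_of_nonpos_of_nonneg ?_ (mul_nonneg h1.le h2)
      linarith [(hb t).2.2]
    have := hmono (left_mem_Icc.2 ha.le) (right_mem_Icc.2 ha.le) ha.le
    simp only [hqa, h0, hpa] at this
    simp at this
    have h3 : 0 < sin (√8 * a) := sin_pos_of_pos_of_lt_pi (mul_pos h8pos ha) (by linarith)
    nlinarith
  exact ⟨by linarith, by linarith⟩

/-- The half-period map satisfies `lim_{p₀ → 0⁺} 𝒯(p₀)/2 = π/(2√2)`, and consequently
`inf_{p₀ ∈ (0,√2)} 𝒯(p₀)/2 = π/(2√2)`. -/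
theorem stmt_11 (F : ℝ → ℝ → ℝ → ℝ × ℝ) (hF : IsHSFlow F)
    (T : ℝ → ℝ) (hT : IsPeriodMap F T)
    (hTmono : StrictMonoOn T (Ioo 0 (Real.sqrt 2))) :
    Tendsto (fun p₀ => T p₀ / 2) (𝓝[>] 0) (𝓝 (π / (2 * Real.sqrt 2))) ∧
    IsGLB ((fun p₀ => T p₀ / 2) '' Ioo (0:ℝ) (Real.sqrt 2)) (π / (2 * Real.sqrt 2)) := by
  have hval : π / (2 * √2) = π / √8 := by
    have : √(8:ℝ) = 2 * √2 := by
      rw [show (8:ℝ) = 2 ^ 2 * 2 by norm_num, Real.sqrt_mul (by norm_num),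
        Real.sqrt_sq (by norm_num)]
    rw [this]
  have hbd : ∀ p₀ ∈ Ioo (0:ℝ) (√2),
      2 * (π / √8) ≤ T p₀ ∧ T p₀ ≤ 2 * (π / √(8 * (1 - p₀ ^ 2 / 2))) := by
    intro p₀ hp
    have hs := hF 0 p₀
    have hsq : p₀ ^ 2 < 2 := by
      have := Real.sq_sqrt (show (0:ℝ) ≤ 2 by norm_num)
      nlinarith [hp.1, hp.2]
    exact period_bounds hs.1 (by simp [hs.2]) (by simp [hs.2]) hp.1 hsq (hT p₀ hp)
  have hmem : ∀ᶠ p₀ in 𝓝[>] (0:ℝ), p₀ ∈ Ioo (0:ℝ) (√2) :=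
    Ioo_mem_nhdsGT (Real.sqrt_pos.2 (by norm_num))
  have hlim : Tendsto (fun p₀ => T p₀ / 2) (𝓝[>] 0) (𝓝 (π / (2 * Real.sqrt 2))) := by
    rw [hval]
    have hup : Tendsto (fun p₀ : ℝ => π / √(8 * (1 - p₀ ^ 2 / 2))) (𝓝[>] 0) (𝓝 (π / √8)) := by
      have hc : ContinuousAt (fun p₀ : ℝ => π / √(8 * (1 - p₀ ^ 2 / 2))) 0 := by
        refine ContinuousAt.div continuousAt_const (by fun_prop) ?_
        exact (Real.sqrt_pos.2 (by norm_num)).ne'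
      have := hc.tendsto
      simp only [ne_eq, OfNat.ofNat_ne_zero, not_false_eq_true, zero_pow, zero_div, sub_zero,
        mul_one] at this
      exact this.mono_left nhdsWithin_le_nhds
    refine tendsto_of_tendsto_of_tendsto_of_le_of_le' tendsto_const_nhds hup ?_ ?_
    · filter_upwards [hmem] with x hx
      linarith [(hbd x hx).1]
    · filter_upwards [hmem] with x hx
      linarith [(hbd x hx).2]
  refine ⟨hlim, ?_, ?_⟩
  · rintro _ ⟨x, hx, rfl⟩
    rw [hval]
    linarith [(hbd x hx).1]
  · intro c hc
    refine ge_of_tendsto hlim ?_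
    filter_upwards [hmem] with x hx
    exact hc ⟨x, hx, rfl⟩
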